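/- Let G be a finite connected simple graph that is saturated, whose number of edges is at most its number of vertices, and with mp(G) = 2. Then G is isomorphic to a star K_{1,Δ} (where Δ is the maximum degree of G). -/

import Mathlib

/-!
Since `mp G = 2`, no path `a - c - b` has `deg a ≤ deg c ≤ deg b`
(`no_three_of_mp_eq_two`), and `G` has an edge (`adj_of_mp_eq_two`).

If every degree were at least `2`, then `|E| ≤ |V|` would make `G` 2-regular and any path on three
vertices would be degree monotone; so there is a leaf `l`, with neighbour `x`
(`exists_leaf`). If every vertex other than `x` is adjacent to `x`, then `G` is a star, because
another edge would give a triangle, which contains a degree monotone path on three vertices.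

Otherwise there is a path `x - w - h` with `h` not adjacent to `x`. Comparing degrees along
`l - x - w` and `x - w - h` gives `deg w < deg x` and `deg w < deg h`, where `deg w ≥ 2`. Adding
the edge `lh` makes the degree of `l` equal to `2`, which is still below the degrees of its
neighbours `x` and `h`, while `h`, whose neighbours all had smaller degree, only moves further
above them. So no degree monotone path on three vertices is created, contradicting
saturation (`adj_of_leaf`).
-/

open SimpleGraph

variable {V : Type*}

/-- The degree of a vertex `v`: the number of neighbours of `v`. -/
noncomputable def gdeg (G : SimpleGraph V) (v : V) : ℕ := (G.neighborSet v).ncard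

/-- A walk is degree monotone if the sequence of degrees of the vertices in the
order in which they appear on the walk is monotone (non-decreasing or non-increasing). -/
def IsDegMonotone (G : SimpleGraph V) {u v : V} (p : G.Walk u v) : Prop :=
  (p.support.map (gdeg G)).Chain' (· ≤ ·) ∨ (p.support.map (gdeg G)).Chain' (· ≥ ·)

/-- `mp G` is the maximum number of vertices of a degree monotone path in `G`. -/
noncomputable def mp (G : SimpleGraph V) : ℕ :=
  sSup {n | ∃ (u v : V) (p : G.Walk u v), p.IsPath ∧ IsDegMonotone G p ∧ p.support.length = n}

/-- The graph obtained from `G` by adding the edge `uv`. -/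
def addEdge (G : SimpleGraph V) (u v : V) : SimpleGraph V :=
  G ⊔ fromEdgeSet {s(u, v)}

/-- `G` is saturated if adding any edge between non-adjacent vertices increases `mp`. -/
def Saturated (G : SimpleGraph V) : Prop :=
  ∀ u v : V, u ≠ v → ¬ G.Adj u v → mp G < mp (addEdge G u v)

/-- `G` is `k`-saturated if `mp G < k` and adding any edge between non-adjacent
vertices creates a degree monotone path on at least `k` vertices. -/
def KSaturated (k : ℕ) (G : SimpleGraph V) : Prop :=
  mp G < k ∧ ∀ u v : V, u ≠ v → ¬ G.Adj u v → k ≤ mp (addEdge G u v)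

/-- `hSat n k` is the minimum number of edges of a `k`-saturated graph on `n` vertices. -/
noncomputable def hSat (n k : ℕ) : ℕ :=
  sInf {m | ∃ G : SimpleGraph (Fin n), KSaturated k G ∧ G.edgeSet.ncard = m}

/-- There is a degree monotone path on exactly three vertices, listed so that the degrees are
non-decreasing. -/
def HasThree (G : SimpleGraph V) : Prop :=
  ∃ a c b : V, G.Adj a c ∧ G.Adj c b ∧ a ≠ b ∧ gdeg G a ≤ gdeg G c ∧ gdeg G c ≤ gdeg G b

lemma mp_bddAbove [Fintype V] (G : SimpleGraph V) :
    BddAbove {n | ∃ (u v : V) (p : G.Walk u v),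
      p.IsPath ∧ IsDegMonotone G p ∧ p.support.length = n} := by
  refine ⟨Fintype.card V, ?_⟩
  rintro n ⟨u, v, p, hp, -, rfl⟩
  exact hp.support_nodup.length_le_card

lemma three_le_mp [Fintype V] {G : SimpleGraph V} (h : HasThree G) : 3 ≤ mp G := by
  obtain ⟨a, c, b, hac, hcb, hab, h1, h2⟩ := h
  refine le_csSup (mp_bddAbove G) ⟨a, b, .cons hac (.cons hcb .nil), ?_, Or.inl ?_, ?_⟩
  · simp [SimpleGraph.Walk.isPath_def, hac.ne, hcb.ne, hab]
  · change List.IsChain _ _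
    simp [h1, h2]
  · simp

/-- The maximum defining `mp` is attained. -/
lemma exists_path_of_mp_pos [Fintype V] {G : SimpleGraph V} (h : 0 < mp G) :
    ∃ (u v : V) (p : G.Walk u v), p.IsPath ∧ IsDegMonotone G p ∧ p.support.length = mp G := by
  refine Nat.sSup_mem (Set.nonempty_iff_ne_empty.2 fun h0 => ?_) (mp_bddAbove G)
  rw [mp, h0] at h
  simp at h

/-- The first three vertices of a degree monotone path form, up to reversal, a path as in `HasThree`. -/
lemma hasThree_of_three_le_mp [Fintype V] {G : SimpleGraph V} (h : 3 ≤ mp G) : HasThree G := by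
  obtain ⟨u, v, p, hp, hm, hl⟩ := exists_path_of_mp_pos (G := G) (by omega)
  rw [← hl] at h
  match p, hp, hm, h with
  | .nil, _, _, h => simp at h
  | .cons _ .nil, _, _, h => simp at h
  | .cons (v := c) hac (.cons (v := b) hcb q), hp, hm, _ =>
    have hub : u ≠ b := by
      rintro rfl
      have := hp.support_nodup
      simp at this
    cases q <;> rcases hm with hm | hm <;> change List.IsChain _ _ at hm <;>
      simp only [SimpleGraph.Walk.support_cons, SimpleGraph.Walk.support_nil, List.map_cons,
        List.map_nil, List.isChain_cons_cons] at hm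
    · exact ⟨u, c, _, hac, hcb, hub, hm.1, hm.2.1⟩
    · exact ⟨_, c, u, hcb.symm, hac.symm, hub.symm, hm.2.1, hm.1⟩
    · exact ⟨u, c, b, hac, hcb, hub, hm.1, hm.2.1⟩
    · exact ⟨b, c, u, hcb.symm, hac.symm, hub.symm, hm.2.1, hm.1⟩

lemma no_three_of_mp_eq_two [Fintype V] {G : SimpleGraph V} (h : mp G = 2) : ¬ HasThree G := by
  intro h3
  have := three_le_mp h3
  omega

lemma adj_of_mp_eq_two [Fintype V] {G : SimpleGraph V} (h : mp G = 2) : ∃ u v, G.Adj u v := by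
  obtain ⟨u, v, p, -, -, hl⟩ := exists_path_of_mp_pos (G := G) (by omega)
  rw [h] at hl
  match p, hl with
  | .nil, hl => simp at hl
  | .cons huv _, _ => exact ⟨_, _, huv⟩

lemma two_le_gdeg [Finite V] {G : SimpleGraph V} {a c b : V} (hac : G.Adj c a) (hcb : G.Adj c b)
    (hab : a ≠ b) : 2 ≤ gdeg G c :=
  (Set.one_lt_ncard_iff (Set.toFinite _)).2 ⟨a, b, hac, hcb, hab⟩

lemma exists_leaf [Fintype V] {G : SimpleGraph V} (hconn : G.Connected)
    (hE : G.edgeSet.ncard ≤ Fintype.card V) (hmp : mp G = 2) :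
    ∃ l x, G.Adj l x ∧ ∀ y, G.Adj l y → y = x := by
  classical
  obtain ⟨u, v, huv⟩ := adj_of_mp_eq_two hmp
  have : Nontrivial V := ⟨u, v, huv.ne⟩
  have hpos : ∀ v, 1 ≤ gdeg G v := fun v => by
    obtain ⟨w, hw⟩ := hconn.preconnected.exists_adj_of_nontrivial v
    exact (Set.ncard_pos (Set.toFinite _)).2 ⟨w, hw⟩
  have hdeg : ∀ v, gdeg G v = G.degree v := fun v => by
    rw [gdeg, Set.ncard_eq_toFinset_card', ← SimpleGraph.card_neighborFinset_eq_degree]; rfl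
  have hsum : ∑ v, gdeg G v ≤ ∑ _v : V, 2 := by
    simp only [hdeg, G.sum_degrees_eq_twice_card_edges]
    rw [Set.ncard_eq_toFinset_card'] at hE
    simp only [Finset.sum_const, Finset.card_univ, smul_eq_mul]
    have : G.edgeFinset.card ≤ Fintype.card V := hE
    omega
  obtain ⟨l, hl⟩ : ∃ l, gdeg G l = 1 := by
    by_contra! hno
    have h2 : ∀ v ∈ Finset.univ, 2 ≤ gdeg G v := fun v _ => by
      have := hpos v; have := hno v; omega
    have heq := (Finset.sum_eq_sum_iff_of_le h2).1 (le_antisymm (Finset.sum_le_sum h2) hsum)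
    have hu : 1 < (G.neighborSet u).ncard := h2 u (Finset.mem_univ _)
    obtain ⟨a, b, ha, hb, hab⟩ := (Set.one_lt_ncard_iff (Set.toFinite _)).1 hu
    refine no_three_of_mp_eq_two hmp ⟨a, u, b, SimpleGraph.Adj.symm ha, hb, hab, ?_, ?_⟩ <;>
      simp [← heq _ (Finset.mem_univ _)]
  obtain ⟨x, hx⟩ := Set.ncard_eq_one.1 hl
  have hx' : ∀ y, G.Adj l y ↔ y = x := fun y => by
    rw [← SimpleGraph.mem_neighborSet, hx, Set.mem_singleton_iff]
  exact ⟨l, x, (hx' x).2 rfl, fun y => (hx' y).1⟩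

lemma addEdge_adj {G : SimpleGraph V} {u v a b : V} (huv : u ≠ v) :
    (addEdge G u v).Adj a b ↔ G.Adj a b ∨ (a = u ∧ b = v) ∨ (a = v ∧ b = u) := by
  simp only [addEdge, SimpleGraph.sup_adj, SimpleGraph.fromEdgeSet_adj, Set.mem_singleton_iff,
    Sym2.eq_iff]
  grind

lemma gdeg_addEdge_left [Finite V] {G : SimpleGraph V} {u v : V} (huv : u ≠ v)
    (hn : ¬ G.Adj u v) : gdeg (addEdge G u v) u = gdeg G u + 1 := by
  have : (addEdge G u v).neighborSet u = insert v (G.neighborSet u) := by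
    ext y
    simp only [SimpleGraph.mem_neighborSet, addEdge_adj huv, Set.mem_insert_iff]
    grind
  rw [gdeg, this, Set.ncard_insert_of_notMem (by simpa using hn) (Set.toFinite _), gdeg]

lemma addEdge_comm (G : SimpleGraph V) (u v : V) : addEdge G u v = addEdge G v u := by
  rw [addEdge, addEdge, Sym2.eq_swap]

lemma gdeg_addEdge_right [Finite V] {G : SimpleGraph V} {u v : V} (huv : u ≠ v)
    (hn : ¬ G.Adj u v) : gdeg (addEdge G u v) v = gdeg G v + 1 := by
  rw [addEdge_comm, gdeg_addEdge_left huv.symm (fun h => hn h.symm)]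

lemma gdeg_addEdge_of_ne {G : SimpleGraph V} {u v a : V} (huv : u ≠ v) (hu : a ≠ u)
    (hv : a ≠ v) : gdeg (addEdge G u v) a = gdeg G a := by
  have : (addEdge G u v).neighborSet a = G.neighborSet a := by
    ext y
    simp only [SimpleGraph.mem_neighborSet, addEdge_adj huv]
    grind
  rw [gdeg, this, gdeg]

/-- The neighbour of a leaf is adjacent to all other vertices: otherwise joining the leaf to a
vertex at distance two from its neighbour would contradict saturation. -/
lemma adj_of_leaf [Fintype V] {G : SimpleGraph V} (hconn : G.Connected) (hsat : Saturated G)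
    (hmp : mp G = 2) {l x : V} (hlx : G.Adj l x) (hl : ∀ y, G.Adj l y → y = x) :
    ∀ v, v ≠ x → G.Adj x v := by
  have h3 : ∀ a c b, G.Adj a c → G.Adj c b → a ≠ b → gdeg G a ≤ gdeg G c →
      gdeg G b < gdeg G c := fun a c b h1 h2 h4 h5 => by
    by_contra! h6
    exact no_three_of_mp_eq_two hmp ⟨a, c, b, h1, h2, h4, h5, h6⟩
  by_contra! hv
  obtain ⟨v, hvx, hv⟩ := hv
  obtain ⟨p⟩ := hconn.preconnected x v
  obtain ⟨⟨⟨w, h⟩, hwh⟩, -, hw, hh⟩ :=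
    p.exists_boundary_dart {y | y = x ∨ G.Adj x y} (by simp) (by simp [hvx, hv])
  simp only [Set.mem_ofPred_eq, not_or] at hw hh hwh
  obtain ⟨hhx, hxh⟩ := hh
  have hxw : G.Adj x w := by
    rcases hw with rfl | hw
    · exact absurd hwh hxh
    · exact hw
  have hl1 : gdeg G l = 1 := by
    refine Set.ncard_eq_one.2 ⟨x, ?_⟩
    ext y
    simp only [SimpleGraph.mem_neighborSet, Set.mem_singleton_iff]
    exact ⟨hl y, fun h => h ▸ hlx⟩
  have hlh : l ≠ h := by rintro rfl; exact hxh hlx.symm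
  have hnlh : ¬ G.Adj l h := fun h' => hhx (hl _ h')
  have hw2 : 2 ≤ gdeg G w := two_le_gdeg hxw.symm hwh (Ne.symm hhx)
  have hlw : l ≠ w := by rintro rfl; omega
  have hx2 : 2 ≤ gdeg G x := two_le_gdeg hlx.symm hxw hlw
  have hwx : gdeg G w < gdeg G x := h3 l x w hlx hxw hlw (by omega)
  have hwh' : gdeg G w < gdeg G h := by
    by_contra! hle
    have := h3 h w x hwh.symm hxw.symm hhx hle
    omega
  have hmax : ∀ y, G.Adj h y → gdeg G y < gdeg G h := fun y hy => by
    by_cases hyw : w = y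
    · exact hyw ▸ hwh'
    · exact h3 w h y hwh hy hyw hwh'.le
  have hnew := hsat l h hlh hnlh
  rw [hmp] at hnew
  obtain ⟨a, c, b, hac, hcb, hab, hd1, hd2⟩ := hasThree_of_three_le_mp hnew
  have dl := gdeg_addEdge_left hlh hnlh
  have dh := gdeg_addEdge_right hlh hnlh
  have dne : ∀ y, y ≠ l → y ≠ h → gdeg (addEdge G l h) y = gdeg G y :=
    fun y => gdeg_addEdge_of_ne hlh
  have dx := dne x hlx.ne.symm (Ne.symm hhx)
  rw [addEdge_adj hlh] at hac hcb
  by_cases hcl : c = l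
  · -- The middle vertex is the former leaf: both its neighbours `x` and `h` are above it.
    subst hcl
    have ha : a = x ∨ a = h := by
      rcases hac with h' | h' | h'
      · exact Or.inl (hl _ h'.symm)
      · exact absurd h'.2 hlh
      · exact Or.inr h'.1
    rcases ha with rfl | rfl <;> omega
  by_cases hch : c = h
  · -- The middle vertex is `h`: all its neighbours are below it.
    subst hch
    by_cases hbl : b = l
    · subst hbl; omega
    · have hcb' : G.Adj c b := by grind
      have := hmax b hcb'
      rw [dne b hbl hcb'.ne.symm] at hd2
      omega
  -- Both edges of the path are old, and the degree of its middle vertex is unchanged.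
  have hac' : G.Adj a c := by grind
  have hcb' : G.Adj c b := by grind
  have dc := dne c hcl hch
  have hale : gdeg G a ≤ gdeg G c := by
    by_cases h1 : a = l
    · subst h1; omega
    by_cases h2 : a = h
    · subst h2; omega
    rw [← dne a h1 h2]; omega
  have hblt := h3 a c b hac' hcb' hab hale
  by_cases h1 : b = l
  · subst h1
    have := hl _ hcb'.symm
    subst this
    omega
  by_cases h2 : b = h
  · subst h2
    have := hmax c hcb'.symm
    omega
  rw [dne b h1 h2] at hd2
  omega

theorem stmt_15 [Fintype V] (G : SimpleGraph V) (hconn : G.Connected)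
    (hsat : Saturated G) (hE : G.edgeSet.ncard ≤ Fintype.card V) (hmp : mp G = 2) :
    ∃ Δ : ℕ, Nonempty (G ≃g completeBipartiteGraph Unit (Fin Δ)) := by
  classical
  obtain ⟨l, x, hlx, hl⟩ := exists_leaf hconn hE hmp
  have hx := adj_of_leaf hconn hsat hmp hlx hl
  -- Sorting the degrees of a triangle `x, a, b` would give a degree monotone path.
  have hind : ∀ a b, a ≠ x → b ≠ x → ¬ G.Adj a b := by
    intro a b ha hb hab
    have hxa := hx a ha
    have hxb := hx b hb
    have key : ∀ p q r, G.Adj p q → G.Adj q r → p ≠ r → gdeg G p ≤ gdeg G q →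
        gdeg G q ≤ gdeg G r → False :=
      fun p q r h1 h2 h4 h5 h6 => no_three_of_mp_eq_two hmp ⟨p, q, r, h1, h2, h4, h5, h6⟩
    rcases le_total (gdeg G a) (gdeg G b) with h1 | h1 <;>
    rcases le_total (gdeg G a) (gdeg G x) with h2 | h2 <;>
    rcases le_total (gdeg G b) (gdeg G x) with h3 | h3
    · exact key a b x hab hxb.symm ha h1 h3
    · exact key a x b hxa.symm hxb hab.ne h2 h3
    · exact key x a b hxa hab (Ne.symm hb) h2 h1
    · exact key x a b hxa hab (Ne.symm hb) h2 h1
    · exact key b a x hab.symm hxa.symm hb h1 h2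
    · exact key b a x hab.symm hxa.symm hb h1 h2
    · exact key b x a hxb.symm hxa hab.ne.symm h3 h2
    · exact key x b a hxb hab.symm (Ne.symm ha) h3 h1
  let f := (Equiv.sumCongr (Equiv.ofUnique Unit {v // v = x})
    (Fintype.equivFin {v // ¬ v = x}).symm).trans (Equiv.sumCompl (· = x))
  have fl : ∀ i, f (Sum.inl i) = x := fun i => (Equiv.ofUnique Unit {v // v = x} i).2
  have fr : ∀ j, f (Sum.inr j) ≠ x := fun j => ((Fintype.equivFin {v // ¬ v = x}).symm j).2
  refine ⟨_, ⟨RelIso.symm ⟨f, ?_⟩⟩⟩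
  rintro (i | i) (j | j)
  · simp [fl]
  · simp [fl, hx _ (fr j)]
  · simp [fl, (hx _ (fr i)).symm]
  · simp [hind _ _ (fr i) (fr j)]
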